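/- Let q = 155. There exist infinitely many even, algebraic-valued, Dirichlet-type periodic functions f with period q that are not constant on the residues coprime to q and satisfy L'(0,f) = 0. Explicitly, for each algebraic number c, the function f defined on 1 ≤ s ≤ 77 with gcd(s,155) = 1 by f(s) = χ(s) - 1 + c (where χ is the even character modulo 155 induced by the non-principal real character modulo 5), extended by evenness and set to 0 on residues not coprime to 155, satisfies L'(0,f) = 0. -/

import Mathlib

open scoped Real

/-- The value at `s = 0` of the derivative of the analytic continuation of
`L(s,f) = ∑_{n ≥ 1} f(n)/n^s`, given via `L(s,f) = q^{-s} ∑_{a=1}^q f(a) ζ(s, a/q)`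
with `ζ` the Hurwitz zeta function. -/
noncomputable def Lderiv0 (q : ℕ) (f : ℤ → ℂ) : ℂ :=
  deriv (fun s : ℂ =>
    (q : ℂ) ^ (-s) *
      ∑ a ∈ Finset.Icc 1 q, f a * HurwitzZeta.hurwitzZeta (((a : ℝ) / q : ℝ) : UnitAddCircle) s) 0

/-- The even character modulo `155` induced by the non-principal real character `χ₀` mod `5`
(with `χ₀(1) = χ₀(4) = 1` and `χ₀(2) = χ₀(3) = -1`): `χ(s) = χ₀(s mod 5)`. -/
noncomputable def chi155 (s : ℤ) : ℂ :=
  if s % 5 = 1 ∨ s % 5 = 4 then 1 else if s % 5 = 2 ∨ s % 5 = 3 then -1 else 0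

instance factPrimeFive : Fact (Nat.Prime 5) := ⟨by norm_num⟩

/-- The quadratic character mod 5 with values in `ℂ`. -/
noncomputable def chiFive : DirichletCharacter ℂ 5 :=
  (quadraticChar (ZMod 5)).ringHomComp (Int.castRingHom ℂ)

lemma chiFive_apply (n : ℤ) : chiFive (n : ZMod 5) = chi155 n := by
  have h0 : quadraticChar (ZMod 5) 0 = 0 := by decide
  have h1 : quadraticChar (ZMod 5) 1 = 1 := by decide
  have h2 : quadraticChar (ZMod 5) 2 = -1 := by decide
  have h3 : quadraticChar (ZMod 5) 3 = -1 := by decide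
  have h4 : quadraticChar (ZMod 5) 4 = 1 := by decide
  have hn : (n : ZMod 5) = ((n % 5 : ℤ) : ZMod 5) := by
    have := ZMod.intCast_mod n 5
    exact_mod_cast this.symm
  have hr : n % 5 = 0 ∨ n % 5 = 1 ∨ n % 5 = 2 ∨ n % 5 = 3 ∨ n % 5 = 4 := by omega
  unfold chi155 chiFive
  rw [hn, MulChar.ringHomComp_apply]
  rcases hr with h | h | h | h | h <;> rw [h] <;> norm_num [h0, h1, h2, h3, h4]

lemma chiFive_even : chiFive.Even := by
  have := chiFive_apply (-1)
  unfold DirichletCharacter.Even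
  push_cast at this
  rw [this]
  norm_num [chi155]

lemma hd155 : 5 ∣ 155 := by norm_num

lemma even_deriv_zero (χ : DirichletCharacter ℂ 5) (h : χ.Even) :
    HasDerivAt (DirichletCharacter.LFunction (DirichletCharacter.changeLevel hd155 χ)) 0 0 := by
  have hz : DirichletCharacter.LFunction χ 0 = 0 := by
    rw [DirichletCharacter.LFunction, ZMod.LFunction_apply_zero_of_even h.to_fun]
    have : χ 0 = 0 := MulChar.map_nonunit _ (by decide)
    rw [this]; simp
  have hpf : Nat.primeFactors 155 = {5, 31} := by
    rw [show 155 = 5 * 31 by norm_num, Nat.primeFactors_mul (by norm_num) (by norm_num),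
      Nat.Prime.primeFactors (by norm_num), Nat.Prime.primeFactors (by norm_num)]
    rfl
  have h5 : χ ((5 : ℕ) : ZMod 5) = 0 := MulChar.map_nonunit _ (by decide)
  have h31 : χ ((31 : ℕ) : ZMod 5) = 1 := by
    rw [show ((31 : ℕ) : ZMod 5) = 1 by decide, map_one]
  have heq : DirichletCharacter.LFunction (DirichletCharacter.changeLevel hd155 χ) =ᶠ[nhds 0]
      fun s => DirichletCharacter.LFunction χ s * (1 - (31 : ℂ) ^ (-s)) := by
    filter_upwards [isOpen_compl_singleton.mem_nhds (show (0 : ℂ) ∈ ({1}ᶜ : Set ℂ) by simp)]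
      with s hs
    rw [DirichletCharacter.LFunction_changeLevel hd155 χ (Or.inr hs), hpf,
      Finset.prod_pair (by norm_num), h5, h31]
    norm_num
  refine HasDerivAt.congr_of_eventuallyEq ?_ heq
  have hA := (DirichletCharacter.differentiableAt_LFunction χ 0 (Or.inl zero_ne_one)).hasDerivAt
  have hB : DifferentiableAt ℂ (fun s : ℂ => 1 - (31 : ℂ) ^ (-s)) 0 := by
    refine (differentiableAt_const _).sub ?_
    exact (differentiableAt_id.neg).const_cpow (Or.inl (by norm_num))
  have := hA.mul hB.hasDerivAt
  have e : deriv (DirichletCharacter.LFunction χ) 0 * (1 - (31 : ℂ) ^ (-(0 : ℂ))) +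
      DirichletCharacter.LFunction χ 0 * deriv (fun s : ℂ => 1 - (31 : ℂ) ^ (-s)) 0 = 0 := by
    simp [hz]
  rw [e] at this
  exact this

lemma chi155_per (n : ℤ) : chi155 (n % 155) = chi155 n := by
  unfold chi155
  rw [Int.emod_emod_of_dvd n (by norm_num : (5 : ℤ) ∣ 155)]

lemma chi155_refl (n : ℤ) : chi155 (155 - n) = chi155 n := by
  rw [← chiFive_apply, ← chiFive_apply]
  have : ((155 - n : ℤ) : ZMod 5) = -(n : ZMod 5) := by
    push_cast
    rw [show (155 : ZMod 5) = 0 by decide, zero_sub]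
  rw [this, chiFive_even.eval_neg]

theorem stmt6 (c : ℂ) (hc : IsAlgebraic ℚ c) (f : ℤ → ℂ)
    (hper : ∀ n : ℤ, f (n + 155) = f n)
    (heven : ∀ n : ℤ, f (-n) = f n)
    (hdir : ∀ n : ℤ, Int.gcd n 155 ≠ 1 → f n = 0)
    (hval : ∀ s : ℤ, 1 ≤ s → s ≤ 77 → Int.gcd s 155 = 1 → f s = chi155 s - 1 + c) :
    (∀ n : ℤ, IsAlgebraic ℚ (f n)) ∧ Lderiv0 155 f = 0 ∧
      ∃ a b : ℤ, 1 ≤ a ∧ a ≤ 77 ∧ Int.gcd a 155 = 1 ∧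
        1 ≤ b ∧ b ≤ 77 ∧ Int.gcd b 155 = 1 ∧ f a ≠ f b := by
  have hP : Function.Periodic f 155 := hper
  have hmod (n : ℤ) : f (n % 155) = f n := by
    have := hP.sub_zsmul_eq (x := n) (n / 155)
    rw [← this]; congr 1
    rw [Int.emod_def, smul_eq_mul]; ring
  have key (n : ℤ) (hn : Int.gcd n 155 = 1) : f n = chi155 n - 1 + c := by
    rw [← hmod, ← chi155_per]
    have hg : Int.gcd (n % 155) 155 = 1 := by
      rw [← hn, Int.emod_def, Int.gcd_sub_mul_left_left]
    generalize hm : n % 155 = m at hg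
    have h0 : 0 ≤ m := by omega
    have h1 : m < 155 := by omega
    have h2 : m ≠ 0 := by rintro rfl; norm_num at hg
    by_cases h : m ≤ 77
    · exact hval m (by omega) h hg
    · have e : f m = f (155 - m) := by
        rw [← heven m, ← hper (-m)]; congr 1; ring
      rw [e, ← chi155_refl m]
      refine hval _ (by omega) (by omega) ?_
      rw [← hg]; simp
  refine ⟨?_, ?_, 1, 2, by norm_num, by norm_num, by norm_num, by norm_num, by norm_num,
    by norm_num, ?_⟩
  · intro n
    by_cases hn : Int.gcd n 155 = 1
    · rw [key n hn]
      have : IsAlgebraic ℚ (chi155 n) := by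
        unfold chi155
        split_ifs
        · exact isAlgebraic_one
        · exact isAlgebraic_one.neg
        · exact isAlgebraic_zero
      exact (this.sub isAlgebraic_one).add hc
    · rw [hdir n hn]; exact isAlgebraic_zero
  · have hfun (n : ℤ) : f n = DirichletCharacter.changeLevel hd155 chiFive (n : ZMod 155) +
        (c - 1) * DirichletCharacter.changeLevel hd155 (1 : DirichletCharacter ℂ 5)
          (n : ZMod 155) := by
      by_cases hn : Int.gcd n 155 = 1
      · have hco : IsCoprime n ((155 : ℕ) : ℤ) := Int.isCoprime_iff_gcd_eq_one.mpr hn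
        have hu : IsUnit (n : ZMod 155) := (ZMod.unitOfIsCoprime n hco).isUnit
        rw [DirichletCharacter.changeLevel_eq_cast_of_dvd' _ _ hco, map_one,
          MulChar.one_apply hu, chiFive_apply, key n hn]
        ring
      · have hu : ¬ IsUnit (n : ZMod 155) := by
          intro hu
          apply hn
          have := (ZMod.coe_int_isUnit_iff_isCoprime n 155).mp hu
          exact Int.isCoprime_iff_gcd_eq_one.mp this.symm
        rw [hdir n hn, MulChar.map_nonunit _ hu, MulChar.map_nonunit _ hu]
        ring
    have hL : (fun s : ℂ => ((155 : ℕ) : ℂ) ^ (-s) *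
        ∑ a ∈ Finset.Icc (1 : ℕ) 155, f (a : ℤ) *
          HurwitzZeta.hurwitzZeta (((a : ℝ) / (155 : ℕ) : ℝ) : UnitAddCircle) s) =
        fun s => DirichletCharacter.LFunction (DirichletCharacter.changeLevel hd155 chiFive) s +
          (c - 1) * DirichletCharacter.LFunction
            (DirichletCharacter.changeLevel hd155 (1 : DirichletCharacter ℂ 5)) s := by
      ext s
      simp only [DirichletCharacter.LFunction, ZMod.LFunction]
      rw [mul_left_comm, ← mul_add, Finset.mul_sum _ _ (c - 1), ← Finset.sum_add_distrib]
      congr 1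
      refine Finset.sum_bij (fun a _ => (a : ZMod 155)) (by simp) ?_ ?_ ?_
      · intro a ha b hb hab
        rw [ZMod.natCast_eq_natCast_iff'] at hab
        rw [Finset.mem_Icc] at ha hb
        omega
      · intro j _
        by_cases hj : j = 0
        · exact ⟨155, by simp, by rw [hj]; rfl⟩
        · refine ⟨j.val, ?_, ZMod.natCast_zmod_val j⟩
          have := ZMod.val_lt j
          have h2 : j.val ≠ 0 := by rwa [Ne, ZMod.val_eq_zero]
          rw [Finset.mem_Icc]; omega
      · intro a _
        have h := ZMod.toAddCircle_intCast (N := 155) (a : ℤ)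
        push_cast at h
        rw [hfun, h]
        push_cast
        ring
    unfold Lderiv0
    rw [hL]
    have h1 := even_deriv_zero chiFive chiFive_even
    have h2 := even_deriv_zero 1 (by
      unfold DirichletCharacter.Even
      exact MulChar.one_apply (by decide))
    have := h1.add (h2.const_mul (c - 1))
    rw [mul_zero, add_zero] at this
    exact this.deriv
  · rw [key 1 (by norm_num), key 2 (by norm_num)]
    norm_num [chi155]
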